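/- Let f_s be the tent map with slope s ∈ (√2, 2), let c = 1/2 be its critical point, and let C = [f_s²(c), f_s(c)] be its core. Then c is linked to itself by f_s if and only if f_s²(c) is linked to itself by the restriction f_s|_C. -/

import Mathlib

/-!
Write `c = 1/2`, `c₁ = f c = s/2`, `c₂ = f c₁ = s (1 - s/2)`. The proof transports linking orbits
by `f²`.

If `z` realises a link from `c` to `c`, then `f² z` realises a link from `c₂` to `c₂`: distances grow
by at most `s²` since `f` is `s`-Lipschitz, and `f² z` lies in the core because `f` has its maximum
`c₁` at `c` and is decreasing near `c₁`.

Conversely, inside the core the only preimage of `c₂` is `c₁` (the other preimage `1 - s/2` lies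
below `c₂`), and the only preimage of `c₁` is `c`. So an orbit in the core that reaches `c₂` at time
`m ≥ 2` passes through `c` at time `m - 2` (`tentMap_core_preimage`). Pulling its starting point
`z` back along the branch of `f²` that sends `c` to `c₂` gives `z₀` near `c` with `f² z₀ = z`,
hence `f^m z₀ = c`. The case `m = 1` would force `z = c₁`, which is not close to `c₂`.
-/

/-- `f` is piecewise linear on `[0,1]` with constant slope `±s`. -/
def PiecewiseLinearConstSlope (f : ℝ → ℝ) (s : ℝ) : Prop :=
  ∃ (k : ℕ) (p : Fin (k + 2) → ℝ), StrictMono p ∧ p 0 = 0 ∧ p (Fin.last (k + 1)) = 1 ∧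
    ∀ i : Fin (k + 1), ∃ a b : ℝ, |b| = s ∧
      ∀ x ∈ Set.Icc (p i.castSucc) (p i.succ), f x = a + b * x

/-- The critical points of an interval map `f : [0,1] → [0,1]`: the endpoints together
with the points where `f` is not differentiable or has zero derivative. -/
def Crit (f : ℝ → ℝ) : Set ℝ :=
  {x | x ∈ Set.Icc (0 : ℝ) 1 ∧
    (x = 0 ∨ x = 1 ∨ ¬ DifferentiableAt ℝ f x ∨ deriv f x = 0)}

/-- `x` is `ε`-linked to `y` by `f` (with all relevant points lying in `A`). -/
def EpsLinkedOn (f : ℝ → ℝ) (A : Set ℝ) (ε x y : ℝ) : Prop :=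
  ∃ m : ℕ, 1 ≤ m ∧ ∃ z ∈ A, f^[m] z = y ∧ ∀ j ≤ m, |f^[j] x - f^[j] z| ≤ ε

/-- `x` is linked to `y` by `f` (as a map of `A`). -/
def LinkedOn (f : ℝ → ℝ) (A : Set ℝ) (x y : ℝ) : Prop :=
  ∀ ε : ℝ, 0 < ε → EpsLinkedOn f A ε x y

/-- `f : [0,1] → [0,1]` has the linking property: every critical point is linked to
some critical point. -/
def LinkingProperty (f : ℝ → ℝ) : Prop :=
  ∀ x ∈ Crit f, ∃ y ∈ Crit f, LinkedOn f (Set.Icc (0 : ℝ) 1) x y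

/-- `f` is topologically transitive as a map of `A`. -/
def TransitiveOn (f : ℝ → ℝ) (A : Set ℝ) : Prop :=
  ∀ U V : Set ℝ, IsOpen U → IsOpen V → (U ∩ A).Nonempty → (V ∩ A).Nonempty →
    ∃ n : ℕ, ∃ x ∈ U ∩ A, f^[n] x ∈ V ∩ A
/-- The tent map with slope `s`. -/
noncomputable def tentMap (s : ℝ) : ℝ → ℝ := fun x => if x ≤ 1 / 2 then s * x else s * (1 - x)

lemma tentMap_lipschitz {s : ℝ} (hs : 1 < s) (x y : ℝ) :
    |tentMap s x - tentMap s y| ≤ s * |x - y| := by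
  have h1 := mul_le_mul_of_nonneg_left (le_abs_self (x - y)) (by linarith : (0 : ℝ) ≤ s)
  have h2 := mul_le_mul_of_nonneg_left (neg_abs_le (x - y)) (by linarith : (0 : ℝ) ≤ s)
  unfold tentMap
  rw [abs_le]
  split_ifs <;> constructor <;> nlinarith

lemma tentMap_half (s : ℝ) : tentMap s (1 / 2) = s / 2 := by
  unfold tentMap
  rw [if_pos le_rfl]
  ring

lemma tentMap_two_half {s : ℝ} (hs : 1 < s) :
    tentMap s (tentMap s (1 / 2)) = s * (1 - s / 2) := by
  rw [tentMap_half]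
  unfold tentMap
  rw [if_neg (by linarith)]

lemma tentMap_le {s : ℝ} (hs : 1 < s) (x : ℝ) : tentMap s x ≤ s / 2 := by
  unfold tentMap
  split_ifs <;> nlinarith

lemma tentMap_core_mapsTo {s : ℝ} (hs : 1 < s) (hs2 : s < 2) :
    Set.MapsTo (tentMap s) (Set.Icc (s * (1 - s / 2)) (s / 2))
      (Set.Icc (s * (1 - s / 2)) (s / 2)) := by
  intro x hx
  refine ⟨?_, tentMap_le hs x⟩
  have hpos : 0 < s * (1 - s / 2) := mul_pos (by linarith) (by linarith)
  obtain ⟨h1, h2⟩ := hx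
  unfold tentMap
  split_ifs <;> nlinarith

/-- The other preimage of `c₂`, namely `1 - s/2`, is excluded since it is smaller than `c₂`. -/
lemma tentMap_core_preimage_one {s : ℝ} (hs : 1 < s) (hs2 : s < 2) {u : ℝ}
    (hu : s * (1 - s / 2) ≤ u) (h : tentMap s u = s * (1 - s / 2)) : u = s / 2 := by
  unfold tentMap at h
  split_ifs at h
  · have := mul_left_cancel₀ (by linarith : s ≠ 0) h
    nlinarith
  · have := mul_left_cancel₀ (by linarith : s ≠ 0) h
    linarith

/-- A point of the core sent to `c₂` by `f²` is the critical point. -/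
lemma tentMap_core_preimage {s : ℝ} (hs : 1 < s) (hs2 : s < 2) {w : ℝ}
    (hw : w ∈ Set.Icc (s * (1 - s / 2)) (s / 2))
    (h : tentMap s (tentMap s w) = s * (1 - s / 2)) : w = 1 / 2 := by
  have h1 := tentMap_core_preimage_one hs hs2 (tentMap_core_mapsTo hs hs2 hw).1 h
  unfold tentMap at h1
  split_ifs at h1
  · have := mul_left_cancel₀ (by linarith : s ≠ 0) (h1.trans (by ring : s / 2 = s * (1 / 2)))
    linarith
  · have := mul_left_cancel₀ (by linarith : s ≠ 0) (h1.trans (by ring : s / 2 = s * (1 / 2)))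
    linarith

lemma tentMap_linked_core_of_linked {s : ℝ} (hs : 1 < s) (hs2 : s < 2)
    (h : LinkedOn (tentMap s) (Set.Icc (0 : ℝ) 1) (1 / 2) (1 / 2)) :
    LinkedOn (tentMap s) (Set.Icc (s * (1 - s / 2)) (s / 2))
      (s * (1 - s / 2)) (s * (1 - s / 2)) := by
  intro ε hε
  have hs0 : 0 < s := by linarith
  -- `f z` has to stay on the decreasing branch, to the right of `1/2`
  have hgap : 0 < (s - 1) / 2 := by linarith
  obtain ⟨m, hm, z, -, hzm, hz⟩ := h (min (ε / s ^ 2) ((s - 1) / 2 / s))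
    (lt_min (by positivity) (by positivity))
  have hit : ∀ (j : ℕ) (x : ℝ), (tentMap s)^[j] (tentMap s (tentMap s x)) =
      tentMap s (tentMap s ((tentMap s)^[j] x)) := by
    intro j x
    rw [← Function.iterate_succ_apply, ← Function.iterate_succ_apply,
      Function.iterate_succ_apply', Function.iterate_succ_apply']
  rw [← tentMap_two_half hs]
  refine ⟨m, hm, tentMap s (tentMap s z), ⟨?_, tentMap_le hs _⟩, by rw [hit, hzm], ?_⟩
  · have h0 := (hz 0 (Nat.zero_le _)).trans (min_le_right _ _)
    simp only [Function.iterate_zero, id] at h0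
    have h1 := tentMap_lipschitz hs (1 / 2) z
    rw [le_div_iff₀ hs0] at h0
    rw [tentMap_half] at h1
    have h2 := (abs_le.1 h1).2
    have h3 := le_abs_self (s / 2 - tentMap s z)
    have h4 := tentMap_le hs z
    rw [tentMap_two_half hs]
    generalize tentMap s z = y at *
    unfold tentMap
    split_ifs <;> nlinarith
  · intro j hj
    rw [hit, hit]
    have h0 := (hz j hj).trans (min_le_left _ _)
    rw [le_div_iff₀ (by positivity)] at h0
    have h1 := tentMap_lipschitz hs ((tentMap s)^[j] (1 / 2)) ((tentMap s)^[j] z)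
    have h2 := tentMap_lipschitz hs (tentMap s ((tentMap s)^[j] (1 / 2)))
      (tentMap s ((tentMap s)^[j] z))
    have h3 := mul_le_mul_of_nonneg_left h1 hs0.le
    nlinarith

lemma tentMap_linked_of_linked_core {s : ℝ} (hs : 1 < s) (hs2 : s < 2)
    (h : LinkedOn (tentMap s) (Set.Icc (s * (1 - s / 2)) (s / 2))
      (s * (1 - s / 2)) (s * (1 - s / 2))) :
    LinkedOn (tentMap s) (Set.Icc (0 : ℝ) 1) (1 / 2) (1 / 2) := by
  intro ε hε
  have hs0 : 0 < s := by linarith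
  have hgap : 0 < s * (s - 1) / 4 := by
    have := mul_pos hs0 (by linarith : 0 < s - 1)
    linarith
  -- The second bound is half of `c₁ - c₂ = s (s - 1) / 2`, which excludes `m = 1`.
  obtain ⟨m, hm, z, hzC, hzm, hz⟩ := h (min ε (s * (s - 1) / 4)) (lt_min hε hgap)
  have h0 := hz 0 (Nat.zero_le _)
  simp only [Function.iterate_zero, id] at h0
  have h0ε := h0.trans (min_le_left _ _)
  have h0g := h0.trans (min_le_right _ _)
  obtain ⟨hz1, hz2⟩ := hzC
  have hzε : z - s * (1 - s / 2) ≤ ε := by linarith [(abs_le.1 h0ε).1]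
  have hzg : z - s * (1 - s / 2) ≤ s * (s - 1) / 4 := by linarith [(abs_le.1 h0g).1]
  obtain ⟨k, rfl⟩ : ∃ k, m = k + 1 := ⟨m - 1, by omega⟩
  rcases k with _ | k
  · simp only [zero_add, Function.iterate_one] at hzm
    have := tentMap_core_preimage_one hs hs2 hz1 hzm
    nlinarith
  rw [Function.iterate_succ_apply', Function.iterate_succ_apply'] at hzm
  have hk := tentMap_core_preimage hs hs2
    ((tentMap_core_mapsTo hs hs2).iterate k ⟨hz1, hz2⟩) hzm
  -- `y` is the preimage of `z` on the decreasing branch, and `z₀` that of `y` on the other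
  obtain ⟨y, hy⟩ : ∃ y, z = s * (1 - y) := ⟨1 - z / s, by field_simp; ring⟩
  obtain ⟨z₀, hz₀⟩ : ∃ z₀, y = s * z₀ := ⟨y / s, by field_simp⟩
  have hy1 : y ≤ s / 2 := by
    by_contra hc
    nlinarith
  have hyg : s / 2 - y ≤ (s - 1) / 4 := by
    by_contra hc
    nlinarith
  have hyε : s / 2 - y ≤ ε := by nlinarith
  have hz₀1 : z₀ ≤ 1 / 2 := by
    by_contra hc
    nlinarith
  have hz₀ε : 1 / 2 - z₀ ≤ ε := by nlinarith
  have hf1 : tentMap s z₀ = y := by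
    unfold tentMap
    rw [if_pos hz₀1, hz₀]
  have hf2 : tentMap s y = z := by
    unfold tentMap
    rw [if_neg (by linarith), hy]
  refine ⟨k + 2, by omega, z₀, ⟨?_, by linarith⟩, ?_, ?_⟩
  · by_contra hc
    nlinarith
  · rw [Function.iterate_succ_apply, Function.iterate_succ_apply, hf1, hf2, hk]
  · intro j hj
    rcases j with _ | _ | j
    · simp only [Function.iterate_zero, id]
      rw [abs_le]
      constructor <;> linarith
    · simp only [zero_add, Function.iterate_one]
      rw [tentMap_half, hf1, abs_le]
      constructor <;> linarith
    · rw [Function.iterate_succ_apply, Function.iterate_succ_apply, tentMap_two_half hs,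
        Function.iterate_succ_apply, Function.iterate_succ_apply, hf1, hf2]
      exact (hz j (by omega)).trans (min_le_left _ _)

/-- For a tent map with slope `s ∈ (√2, 2)`, critical point `c = 1/2`
and core `C = [f_s²(c), f_s(c)]`, the point `c` is linked to itself by `f_s` (as a map
of `[0,1]`) if and only if `f_s²(c)` is linked to itself by the restriction `f_s|_C`. -/
theorem tentMap_linked_iff_core_linked (s : ℝ) (hs : s ∈ Set.Ioo (Real.sqrt 2) 2) :
    LinkedOn (tentMap s) (Set.Icc (0 : ℝ) 1) (1 / 2) (1 / 2) ↔
    LinkedOn (tentMap s)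
      (Set.Icc (tentMap s (tentMap s (1 / 2))) (tentMap s (1 / 2)))
      (tentMap s (tentMap s (1 / 2))) (tentMap s (tentMap s (1 / 2))) := by
  have hs1 : 1 < s := (Real.lt_sqrt_of_sq_lt (by norm_num)).trans hs.1
  rw [tentMap_two_half hs1, tentMap_half]
  exact ⟨tentMap_linked_core_of_linked hs1 hs.2, tentMap_linked_of_linked_core hs1 hs.2⟩
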